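/- Let (M,E,η) be a factorable monoid satisfying the stronger conditions η′(x·s) = η′(η′(x)·s) and η̄(x·s) = η̄(x)·η̄(η′(x)·s) for all x ∈ M and s ∈ E. Then f₁f₂f₁f₂ = f₂f₁f₂ = f₂f₁f₂f₁ as maps M³ → M³ (honest equality, not merely in the graded sense). Moreover, for words I, J ∈ F_n with I ∼_Q J and any tuple (x_{n+1},…,x_1) ∈ E^{n+1} of generators, f_I(x_{n+1},…,x_1) = f_J(x_{n+1},…,x_1), where for I = (i_s,…,i_1) one sets f_I = f_{i_s}∘⋯∘f_{i_1} : M^{n+1} → M^{n+1}. -/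

import Mathlib

/-- The word length of `m` with respect to the generating set `E`:
the least `n` such that `m` is a product of `n` elements of `E`. -/
noncomputable def wordLength {M : Type*} [Monoid M] (E : Set M) (m : M) : ℕ :=
  sInf {n | ∃ l : List M, (∀ x ∈ l, x ∈ E) ∧ l.length = n ∧ l.prod = m}

/-- `E` is a generating set of the monoid `M`. -/
def IsGenSet {M : Type*} [Monoid M] (E : Set M) : Prop :=
  ∀ m : M, ∃ l : List M, (∀ x ∈ l, x ∈ E) ∧ l.prod = m

/-- The pair `(a, b)` is geodesic with respect to `E`. -/
noncomputable def Geodesic {M : Type*} [Monoid M] (E : Set M) (a b : M) : Prop :=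
  wordLength E (a * b) = wordLength E a + wordLength E b

/-- A factorization map `η = (η̄, η′)` on `(M, E)`. -/
noncomputable def IsFactorizationMap {M : Type*} [Monoid M] (E : Set M)
    (η : M → M × M) : Prop :=
  (∀ m, (η m).1 * (η m).2 = m) ∧
  (∀ m, wordLength E m = wordLength E (η m).1 + wordLength E (η m).2) ∧
  (∀ m, m ≠ 1 → (η m).2 ∈ E) ∧
  η 1 = (1, 1)

/-- The map `f₁ : M³ → M³` applying `η` to the product of the two right entries,
with triples written `(x₃, x₂, x₁)`. -/
def f1 {M : Type*} [Monoid M] (η : M → M × M) (p : M × M × M) : M × M × M :=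
  (p.1, η (p.2.1 * p.2.2))

/-- The map `f₂ : M³ → M³` applying `η` to the product of the two left entries. -/
def f2 {M : Type*} [Monoid M] (η : M → M × M) (p : M × M × M) : M × M × M :=
  ((η (p.1 * p.2.1)).1, (η (p.1 * p.2.1)).2, p.2.2)

/-- The sum of the word lengths of the entries of a triple. -/
noncomputable def tnorm {M : Type*} [Monoid M] (E : Set M) (p : M × M × M) : ℕ :=
  wordLength E p.1 + wordLength E p.2.1 + wordLength E p.2.2

/-- `η` is a factorability structure on `(M, E)`: it is a factorization map and the
three maps `f₁f₂f₁f₂`, `f₂f₁f₂`, `f₂f₁f₂f₁ : M³ → M³` are equal in the graded sense. -/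
noncomputable def IsFactorable {M : Type*} [Monoid M] (E : Set M) (η : M → M × M) : Prop :=
  IsFactorizationMap E η ∧
  ∀ p : M × M × M,
    (f1 η (f2 η (f1 η (f2 η p))) = f2 η (f1 η (f2 η p)) ∧
     f2 η (f1 η (f2 η p)) = f2 η (f1 η (f2 η (f1 η p)))) ∨
    (tnorm E (f1 η (f2 η (f1 η (f2 η p)))) < tnorm E p ∧
     tnorm E (f2 η (f1 η (f2 η p))) < tnorm E p ∧
     tnorm E (f2 η (f1 η (f2 η (f1 η p)))) < tnorm E p)

/-- `η` is a weak factorability structure on `(M, E)`. -/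
noncomputable def IsWeaklyFactorable {M : Type*} [Monoid M] (E : Set M)
    (η : M → M × M) : Prop :=
  IsFactorizationMap E η ∧
  ∀ x : M, ∀ t ∈ E,
    Geodesic E (η x).2 t →
    Geodesic E (η x).1 (η ((η x).2 * t)).1 →
    Geodesic E x t ∧
    (η (x * t)).2 = (η ((η x).2 * t)).2 ∧
    (η (x * t)).1 = (η x).1 * (η ((η x).2 * t)).1

/-- `η` satisfies the recognition principle. -/
def RecognitionPrinciple {M : Type*} [Monoid M] (E : Set M) (η : M → M × M) : Prop :=
  ∀ m : M, ∀ a ∈ E, (η (m * a) = (m, a) ↔ η ((η m).2 * a) = ((η m).2, a))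


/-- `w` is a word of the free monoid `F_n` on the letters `{1, …, n}`. -/
def InF (n : ℕ) (w : List ℕ) : Prop := ∀ a ∈ w, 1 ≤ a ∧ a ≤ n

/-- The congruence on a free monoid of words generated by a relation `r`. -/
inductive CongClosure (r : List ℕ → List ℕ → Prop) : List ℕ → List ℕ → Prop
  | rel (u v : List ℕ) {x y : List ℕ} : r x y → CongClosure r (u ++ x ++ v) (u ++ y ++ v)
  | refl (x : List ℕ) : CongClosure r x x
  | symm {x y : List ℕ} : CongClosure r x y → CongClosure r y x
  | trans {x y z : List ℕ} : CongClosure r x y → CongClosure r y z → CongClosure r x z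

/-- The defining relations of `P_n`: `ab = ba` for `|a − b| ≥ 2`, and `aa = a`. -/
inductive PRel (n : ℕ) : List ℕ → List ℕ → Prop
  | comm (a b : ℕ) : 1 ≤ a → a ≤ n → 1 ≤ b → b ≤ n → (a + 2 ≤ b ∨ b + 2 ≤ a) →
      PRel n [a, b] [b, a]
  | idem (a : ℕ) : 1 ≤ a → a ≤ n → PRel n [a, a] [a]

/-- The congruence `∼_P` on `F_n`. -/
def PCong (n : ℕ) : List ℕ → List ℕ → Prop := CongClosure (PRel n)

/-- The defining relations of `Q_n`: those of `P_n` together with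
`k(k+1)k(k+1) = (k+1)k(k+1)` and `(k+1)k(k+1)k = (k+1)k(k+1)`. -/
inductive QRel (n : ℕ) : List ℕ → List ℕ → Prop
  | ofP {x y : List ℕ} : PRel n x y → QRel n x y
  | braid1 (k : ℕ) : 1 ≤ k → k + 1 ≤ n → QRel n [k, k + 1, k, k + 1] [k + 1, k, k + 1]
  | braid2 (k : ℕ) : 1 ≤ k → k + 1 ≤ n → QRel n [k + 1, k, k + 1, k] [k + 1, k, k + 1]

/-- The congruence `∼_Q` on `F_n`. -/
def QCong (n : ℕ) : List ℕ → List ℕ → Prop := CongClosure (QRel n)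

/-- The defining relations of `Q_n'`: those of `Q_n` together with the pairs `(kJ, J)`
for which there exists `I ∈ F_n` with `kIJ ∼_Q IJ`, `kI ∼_P Ik` and `k` not occurring
in `I`. -/
inductive RRel (n : ℕ) : List ℕ → List ℕ → Prop
  | ofQ {x y : List ℕ} : QRel n x y → RRel n x y
  | absorb (k : ℕ) (I J : List ℕ) : 1 ≤ k → k ≤ n → InF n I → InF n J →
      QCong n ((k :: I) ++ J) (I ++ J) → PCong n (k :: I) (I ++ [k]) → k ∉ I →
      RRel n (k :: J) J

/-- The congruence `∼` on `F_n`; the quotient monoid `F_n/∼` is `Q_n'`. -/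
def RCong (n : ℕ) : List ℕ → List ℕ → Prop := CongClosure (RRel n)

/-- The shift homomorphism `sh_k : F_{n−k} → F_n`, `i ↦ i + k`. -/
def sh (k : ℕ) (w : List ℕ) : List ℕ := w.map (· + k)

/-- The word `I_a^b = a·(a+1)⋯b`. -/
def Iseg (a b : ℕ) : List ℕ := List.range' a (b + 1 - a)

/-- The map `f_i : M^{n+1} → M^{n+1}` on tuples `(x_{n+1}, …, x_1)` (encoded as
functions `ℕ → M`, the entry `x_j` being the value at `j`): it replaces the pair
`(x_{i+1}, x_i)` by `(η̄(x_{i+1}·x_i), η′(x_{i+1}·x_i))`. -/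
def fApply {M : Type*} [Monoid M] (η : M → M × M) (i : ℕ) (v : ℕ → M) : ℕ → M :=
  fun j =>
    if j = i + 1 then (η (v (i + 1) * v i)).1
    else if j = i then (η (v (i + 1) * v i)).2
    else v j

/-- For a word `I = (i_s, …, i_1)` (a list with `i_s` first), the composition
`f_I = f_{i_s} ∘ ⋯ ∘ f_{i_1}`. -/
def fWord {M : Type*} [Monoid M] (η : M → M × M) (I : List ℕ) (v : ℕ → M) : ℕ → M :=
  I.foldr (fun i w => fApply η i w) v

section WordLength

variable {M : Type*} [Monoid M] {E : Set M}

theorem exists_list_length_eq_wordLength (hgen : IsGenSet E) (m : M) :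
    ∃ l : List M, (∀ x ∈ l, x ∈ E) ∧ l.length = wordLength E m ∧ l.prod = m := by
  obtain ⟨l, hl, hm⟩ := hgen m
  exact Nat.sInf_mem
    (s := {n | ∃ l : List M, (∀ x ∈ l, x ∈ E) ∧ l.length = n ∧ l.prod = m})
    ⟨l.length, l, hl, rfl, hm⟩

theorem wordLength_prod_le {l : List M} (hl : ∀ x ∈ l, x ∈ E) :
    wordLength E l.prod ≤ l.length :=
  Nat.sInf_le ⟨l, hl, rfl, rfl⟩

theorem wordLength_one : wordLength E (1 : M) = 0 :=
  Nat.le_zero.1 (wordLength_prod_le (E := E) (l := []) (by simp))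

theorem wordLength_mul_le (hgen : IsGenSet E) (a b : M) :
    wordLength E (a * b) ≤ wordLength E a + wordLength E b := by
  obtain ⟨k, hk, hka, rfl⟩ := exists_list_length_eq_wordLength hgen a
  obtain ⟨l, hl, hlb, rfl⟩ := exists_list_length_eq_wordLength hgen b
  rw [← hka, ← hlb, ← List.prod_append, ← List.length_append]
  exact wordLength_prod_le fun x hx => (List.mem_append.1 hx).elim (hk x) (hl x)

theorem eq_one_of_wordLength_eq_zero (hgen : IsGenSet E) {m : M}
    (hm : wordLength E m = 0) : m = 1 := by
  obtain ⟨l, -, hl, rfl⟩ := exists_list_length_eq_wordLength hgen m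
  rw [List.length_eq_zero_iff.1 (hl.trans hm), List.prod_nil]

theorem wordLength_eq_one_of_mem (h1 : (1 : M) ∉ E) (hgen : IsGenSet E) {s : M}
    (hs : s ∈ E) : wordLength E s = 1 := by
  have hle : wordLength E s ≤ 1 := by
    simpa using wordLength_prod_le (E := E) (l := [s]) (by simpa using hs)
  have hne : wordLength E s ≠ 0 := fun h =>
    h1 (eq_one_of_wordLength_eq_zero hgen h ▸ hs)
  omega

theorem wordLength_mul_mul_le_tnorm (hgen : IsGenSet E) (p : M × M × M) :
    wordLength E (p.1 * p.2.1 * p.2.2) ≤ tnorm E p :=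
  (wordLength_mul_le hgen _ _).trans (Nat.add_le_add_right (wordLength_mul_le hgen _ _) _)

end WordLength

section Factorization

variable {M : Type*} [Monoid M] {E : Set M} {η : M → M × M}

namespace IsFactorizationMap

theorem apply_generator (h1 : (1 : M) ∉ E) (hgen : IsGenSet E)
    (hη : IsFactorizationMap E η) {s : M} (hs : s ∈ E) : η s = (1, s) := by
  obtain ⟨hmul, hlen, hmem, -⟩ := hη
  have hs1 : s ≠ 1 := fun h => h1 (h ▸ hs)
  have h := hlen s
  rw [wordLength_eq_one_of_mem h1 hgen hs,
    wordLength_eq_one_of_mem h1 hgen (hmem s hs1)] at h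
  have hfst : (η s).1 = 1 := eq_one_of_wordLength_eq_zero hgen (by omega)
  have hsnd : (η s).2 = s := by simpa [hfst] using hmul s
  exact Prod.ext hfst hsnd

theorem apply_snd (h1 : (1 : M) ∉ E) (hgen : IsGenSet E)
    (hη : IsFactorizationMap E η) (x : M) : η (η x).2 = (1, (η x).2) := by
  by_cases hx : x = 1
  · simp [hx, hη.2.2.2]
  · exact hη.apply_generator h1 hgen (hη.2.2.1 x hx)

/-- The strong conditions for right multiplication by generators extend to right
multiplication by arbitrary elements. -/
theorem apply_mul_of_strong (h1 : (1 : M) ∉ E) (hgen : IsGenSet E)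
    (hη : IsFactorizationMap E η)
    (hstrong : ∀ x : M, ∀ s ∈ E,
      (η (x * s)).2 = (η ((η x).2 * s)).2 ∧
      (η (x * s)).1 = (η x).1 * (η ((η x).2 * s)).1) (x c : M) :
    η (x * c) = ((η x).1 * (η ((η x).2 * c)).1, (η ((η x).2 * c)).2) := by
  obtain ⟨l, hl, rfl⟩ := hgen c
  induction l using List.reverseRecOn with
  | nil => simp [hη.apply_snd h1 hgen x]
  | append_singleton l s ih =>
    have ih := ih fun y hy => hl y (by simp [hy])
    have hs : s ∈ E := hl s (by simp)
    obtain ⟨hx₂, hx₁⟩ := hstrong (x * l.prod) s hs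
    obtain ⟨hy₂, hy₁⟩ := hstrong ((η x).2 * l.prod) s hs
    rw [ih] at hx₁ hx₂
    simp only [List.prod_append, List.prod_singleton, ← mul_assoc]
    exact Prod.ext (by rw [hx₁, hy₁, mul_assoc]) (by rw [hx₂, hy₂])

theorem f1_mul (hη : IsFactorizationMap E η) (p : M × M × M) :
    (f1 η p).1 * (f1 η p).2.1 * (f1 η p).2.2 = p.1 * p.2.1 * p.2.2 := by
  simp only [f1, mul_assoc, hη.1]

theorem f2_mul (hη : IsFactorizationMap E η) (p : M × M × M) :
    (f2 η p).1 * (f2 η p).2.1 * (f2 η p).2.2 = p.1 * p.2.1 * p.2.2 := by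
  simp only [f2, hη.1]

/-- Under the strong conditions, `f₂f₁f₂` depends only on the product of the entries. -/
theorem f2_f1_f2_of_strong (h1 : (1 : M) ∉ E) (hgen : IsGenSet E)
    (hη : IsFactorizationMap E η)
    (hstrong : ∀ x : M, ∀ s ∈ E,
      (η (x * s)).2 = (η ((η x).2 * s)).2 ∧
      (η (x * s)).1 = (η x).1 * (η ((η x).2 * s)).1) (p : M × M × M) :
    f2 η (f1 η (f2 η p)) =
      ((η (η (p.1 * p.2.1 * p.2.2)).1).1, (η (η (p.1 * p.2.1 * p.2.2)).1).2,
        (η (p.1 * p.2.1 * p.2.2)).2) := by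
  rw [hη.apply_mul_of_strong h1 hgen hstrong (p.1 * p.2.1) p.2.2]
  rfl

end IsFactorizationMap

theorem IsFactorable.f1_f2_eq_of_strong (h1 : (1 : M) ∉ E) (hgen : IsGenSet E)
    (hfac : IsFactorable E η)
    (hstrong : ∀ x : M, ∀ s ∈ E,
      (η (x * s)).2 = (η ((η x).2 * s)).2 ∧
      (η (x * s)).1 = (η x).1 * (η ((η x).2 * s)).1) (p : M × M × M) :
    f1 η (f2 η (f1 η (f2 η p))) = f2 η (f1 η (f2 η p)) ∧
      f2 η (f1 η (f2 η p)) = f2 η (f1 η (f2 η (f1 η p))) := by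
  obtain ⟨hη, hgraded⟩ := hfac
  have hnf := hη.f2_f1_f2_of_strong h1 hgen hstrong
  refine ⟨?_, by rw [hnf, hnf, hη.f1_mul]⟩
  -- The triple `(1, 1, y)` has minimal norm among those with product `y`,
  -- so the graded identity is an honest one there.
  set y := p.1 * p.2.1 * p.2.2 with hy
  have hp : f2 η (f1 η (f2 η p)) = f2 η (f1 η (f2 η (1, 1, y))) := by
    rw [hnf, hnf]
    simp [hy]
  rw [hp]
  rcases hgraded (1, 1, y) with h | ⟨-, h, -⟩
  · exact h.1
  · have hle := wordLength_mul_mul_le_tnorm hgen (f2 η (f1 η (f2 η (1, 1, y))))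
    rw [hη.f2_mul, hη.f1_mul, hη.f2_mul] at hle
    simp only [tnorm, wordLength_one, one_mul] at h hle
    omega

end Factorization

section Tuples

/-- Replace the entries `(v_{k+2}, v_{k+1}, v_k)` of the tuple `v` by the triple `p`. -/
def replaceTriple {M : Type*} (v : ℕ → M) (k : ℕ) (p : M × M × M) : ℕ → M :=
  fun j => if j = k + 2 then p.1 else if j = k + 1 then p.2.1 else if j = k then p.2.2 else v j

theorem replaceTriple_self {M : Type*} (v : ℕ → M) (k : ℕ) :
    replaceTriple v k (v (k + 2), v (k + 1), v k) = v := by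
  funext j
  unfold replaceTriple
  split_ifs <;> simp_all

variable {M : Type*} [Monoid M] {η : M → M × M}

theorem fApply_replaceTriple (v : ℕ → M) (k : ℕ) (p : M × M × M) :
    fApply η k (replaceTriple v k p) = replaceTriple v k (f1 η p) := by
  funext j
  simp only [fApply, replaceTriple, f1]
  split_ifs <;> first | omega | simp_all

theorem fApply_succ_replaceTriple (v : ℕ → M) (k : ℕ) (p : M × M × M) :
    fApply η (k + 1) (replaceTriple v k p) = replaceTriple v k (f2 η p) := by
  funext j
  simp only [fApply, replaceTriple, f2]
  split_ifs <;> first | omega | simp_all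

theorem fApply_comm {a b : ℕ} (hab : a + 2 ≤ b) (v : ℕ → M) :
    fApply η a (fApply η b v) = fApply η b (fApply η a v) := by
  funext j
  simp only [fApply]
  split_ifs <;> first | omega | rfl

theorem fApply_idem (hmul : ∀ m, (η m).1 * (η m).2 = m) (a : ℕ) (v : ℕ → M) :
    fApply η a (fApply η a v) = fApply η a v := by
  funext j
  have ha : a ≠ a + 1 := by omega
  simp only [fApply, if_true, if_neg ha, hmul]
  split_ifs <;> rfl

theorem fWord_append (I J : List ℕ) (v : ℕ → M) :
    fWord η (I ++ J) v = fWord η I (fWord η J v) :=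
  List.foldr_append

theorem fWord_eq_of_congClosure {r : List ℕ → List ℕ → Prop}
    (hr : ∀ x y, r x y → ∀ v : ℕ → M, fWord η x v = fWord η y v) {I J : List ℕ}
    (h : CongClosure r I J) (v : ℕ → M) : fWord η I v = fWord η J v := by
  induction h with
  | rel u w hxy => simp only [fWord_append, hr _ _ hxy]
  | refl x => rfl
  | symm _ ih => exact ih.symm
  | trans _ _ ih₁ ih₂ => exact ih₁.trans ih₂

theorem fWord_eq_of_qRel (hmul : ∀ m, (η m).1 * (η m).2 = m)
    (hbraid : ∀ p : M × M × M,
      f1 η (f2 η (f1 η (f2 η p))) = f2 η (f1 η (f2 η p)) ∧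
      f2 η (f1 η (f2 η p)) = f2 η (f1 η (f2 η (f1 η p))))
    {n : ℕ} {I J : List ℕ} (h : QRel n I J) (v : ℕ → M) : fWord η I v = fWord η J v := by
  cases h with
  | ofP h =>
    cases h with
    | comm a b _ _ _ _ hab =>
      rcases hab with hab | hab
      · exact fApply_comm hab v
      · exact (fApply_comm hab v).symm
    | idem a => exact fApply_idem hmul a v
  | braid1 k =>
    rw [← replaceTriple_self v k]
    simp only [fWord, List.foldr_cons, List.foldr_nil, fApply_replaceTriple,
      fApply_succ_replaceTriple, (hbraid _).1]
  | braid2 k =>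
    rw [← replaceTriple_self v k]
    simp only [fWord, List.foldr_cons, List.foldr_nil, fApply_replaceTriple,
      fApply_succ_replaceTriple, ← (hbraid _).2]

end Tuples

/-- Let `(M, E, η)` be a factorable monoid satisfying the stronger conditions
`η′(x·s) = η′(η′(x)·s)` and `η̄(x·s) = η̄(x)·η̄(η′(x)·s)` for all `x ∈ M`, `s ∈ E`. Then
`f₁f₂f₁f₂ = f₂f₁f₂ = f₂f₁f₂f₁` as maps `M³ → M³` (honest equality), and for words
`I ∼_Q J` in `F_n` and every tuple of generators `(x_{n+1}, …, x_1) ∈ E^{n+1}` one has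
`f_I(x_{n+1}, …, x_1) = f_J(x_{n+1}, …, x_1)`. -/
theorem evaluation_lemma_Q
    {M : Type*} [Monoid M] (E : Set M) (h1 : (1 : M) ∉ E) (hgen : IsGenSet E)
    (η : M → M × M) (hfac : IsFactorable E η)
    (hstrong : ∀ x : M, ∀ s ∈ E,
      (η (x * s)).2 = (η ((η x).2 * s)).2 ∧
      (η (x * s)).1 = (η x).1 * (η ((η x).2 * s)).1) :
    (∀ p : M × M × M,
      f1 η (f2 η (f1 η (f2 η p))) = f2 η (f1 η (f2 η p)) ∧
      f2 η (f1 η (f2 η p)) = f2 η (f1 η (f2 η (f1 η p)))) ∧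
    (∀ (n : ℕ) (I J : List ℕ), InF n I → InF n J → QCong n I J →
      ∀ v : ℕ → M, (∀ j, 1 ≤ j → j ≤ n + 1 → v j ∈ E) →
        fWord η I v = fWord η J v) := by
  have hbraid := hfac.f1_f2_eq_of_strong h1 hgen hstrong
  exact ⟨hbraid, fun _ _ _ _ _ hIJ v _ =>
    fWord_eq_of_congClosure (fun _ _ h => fWord_eq_of_qRel hfac.1.1 hbraid h) hIJ v⟩
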